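/- arXiv:2208.00082 — 2 statements merged into one kernel-verified Lean document; each statement's English description precedes it below -/
import Mathlib

section
/- Let N ≥ 1, γ > 2, and let h ∈ ℝ with h ≠ 0. Let v : ℝ^N × (0,∞) → ℝ be a smooth (C^∞) function satisfying −∂ₜv(x,t) − Δv(x,t) + h |Dv(x,t)|^γ = 0 at every point (x,t) ∈ ℝ^N × (0,∞). Suppose that for some α ∈ (0,1) the quantity sup { |v(x,t) − v(x',t')| / (|x − x'|^α + |t − t'|^{α/2}) : (x,t), (x',t') ∈ ℝ^N × (0,∞), (x,t) ≠ (x',t') } is finite. Then v is constant on ℝ^N × (0,∞). -/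
/-!
The proof doubles the variables and works directly with the space modulus of continuity of `v`;
the nonlinearity `h|Dv|^γ` cancels up to a small error, since the two gradients nearly agree at a
maximum of the doubled function.

In reversed time `s = T - t` the equation is a forward viscous Hamilton-Jacobi equation, and
`v(x,t) - v(y,t)` is compared, on `|x - y| ≤ R` and `t₀ ≤ t ≤ T`, with the barrier
`G(r,t) = L r + C exp(-λ(T - t)) (2R² - r²)`, `r = |x - y|`, where `λ = 4 / R²`,
`L = M R^α / R` and `C = M R^α / R²`. With `A = C exp(-λ(T - t))`:

* `G ≥ M r^α` at `t = T` and at `r = R`, and `G ≥ 0` at `r = 0`, so the Hölder bound makes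
  `v(x,t) - v(y,t) ≤ G` on these parts of the boundary;
* inside, `-∂ₜG ≥ 4 ∂ᵣᵣG`, because `λ(2R² - r²) A ≤ 8A`.

The penalties `ε|x|²` and `η(T - t)` make a positive maximum of the difference attained and the
supersolution strict. At such a maximum `(x,y,t)`:

* moving `x` along `eᵢ` and `y` along its image under the reflection in `(x - y)ᗮ` changes `x - y`
  only radially; summing the second-order conditions over `i` gives
  `Δv(x) - Δv(y) + 8A - 2Nε ≤ 0` (`lap_at_max`);
* moving both points in parallel gives `Dv(x) - Dv(y) = 2εx` (`grad_sub_at_max`), of size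
  `O(√ε)`, and `|Dv(y)|` is bounded independently of `ε` (`norm_grad_at_max`), so the two
  nonlinear terms differ by less than `η / 2` for small `ε` (`exists_penalty`);
* the right time derivative is nonpositive.

Inserting these in the equation is contradictory, which is `comparison`. Letting `η → 0`,
then `T → ∞`, then `R → ∞` yields `v(x,t₀) - v(y,t₀) ≤ lim M R^(α-1) |x - y| = 0`. Hence `v` does
not depend on `x`, and then the equation gives `∂ₜv = 0`.
-/

open Set Metric

noncomputable section

/-- Time derivative `∂ₜ v`. -/
def timeDeriv {N : ℕ} (v : EuclideanSpace ℝ (Fin N) × ℝ → ℝ)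
    (x : EuclideanSpace ℝ (Fin N)) (t : ℝ) : ℝ := deriv (fun s => v (x, s)) t

/-- Spatial gradient `Dv`. -/
def spatialGrad {N : ℕ} (v : EuclideanSpace ℝ (Fin N) × ℝ → ℝ)
    (x : EuclideanSpace ℝ (Fin N)) (t : ℝ) : EuclideanSpace ℝ (Fin N) :=
  gradient (fun y => v (y, t)) x

/-- Spatial Laplacian `Δv`. -/
def spatialLap {N : ℕ} (v : EuclideanSpace ℝ (Fin N) × ℝ → ℝ)
    (x : EuclideanSpace ℝ (Fin N)) (t : ℝ) : ℝ :=
  ∑ i : Fin N,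
    fderiv ℝ (fun y => fderiv ℝ (fun z => v (z, t)) y (EuclideanSpace.single i 1)) x
      (EuclideanSpace.single i 1)

open Filter Topology

/-! ### Derivative tests on the line -/

/-- If `c` were positive, `0` would also be a local minimum, so `f` would be locally constant. -/
theorem second_deriv_nonpos {f f' : ℝ → ℝ} {c : ℝ} (hmax : IsLocalMax f 0)
    (h1 : ∀ τ, HasDerivAt f (f' τ) τ) (h2 : HasDerivAt f' c 0) : c ≤ 0 := by
  by_contra! hc
  have hd : deriv f = f' := funext fun τ => (h1 τ).deriv
  have hmin : IsLocalMin f 0 := by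
    apply isLocalMin_of_deriv_deriv_pos
    · rw [hd, h2.deriv]; exact hc
    · exact hmax.deriv_eq_zero
    · exact (h1 0).continuousAt
  have hconst : f =ᶠ[𝓝 0] fun _ => f 0 := by
    filter_upwards [hmax, hmin] with τ a b using le_antisymm a b
  have h3 : f' =ᶠ[𝓝 0] fun _ => 0 := by
    filter_upwards [hconst.deriv] with τ a
    rw [← hd, a]; simp
  have := (h2.congr_of_eventuallyEq h3.symm).unique (hasDerivAt_const 0 (0 : ℝ))
  linarith

theorem right_deriv_nonpos {f : ℝ → ℝ} {c a : ℝ} (hmax : ∀ᶠ τ in 𝓝[>] a, f τ ≤ f a)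
    (h1 : HasDerivAt f c a) : c ≤ 0 := by
  have h := (hasDerivAt_iff_tendsto_slope.1 h1).mono_left
    (nhdsWithin_mono a (show Ioi a ⊆ {a}ᶜ from fun x hx => ne_of_gt hx))
  refine le_of_tendsto h ?_
  filter_upwards [hmax, self_mem_nhdsWithin] with τ h1 h2
  rw [slope_def_field]
  exact div_nonpos_of_nonpos_of_nonneg (by linarith) (by have : a < τ := h2; linarith)

/-! ### Spatial optimality conditions for the doubled function -/

section
variable {N : ℕ}

/-- The sum of the pure second derivatives does not depend on the orthonormal basis, being the
Laplacian. -/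
theorem sum_second_deriv_basis {f : EuclideanSpace ℝ (Fin N) → ℝ} (hf : ContDiff ℝ 2 f)
    (x : EuclideanSpace ℝ (Fin N))
    (b : OrthonormalBasis (Fin N) ℝ (EuclideanSpace ℝ (Fin N))) :
    ∑ i, fderiv ℝ (fun y => fderiv ℝ f y (b i)) x (b i) = Laplacian.laplacian f x := by
  rw [InnerProductSpace.laplacian_eq_iteratedFDeriv_orthonormalBasis f b]
  refine Finset.sum_congr rfl fun i _ => ?_
  have hd : DifferentiableAt ℝ (fderiv ℝ f) x :=
    (hf.fderiv_right (m := 1) (by norm_num)).differentiable (by norm_num) x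
  rw [iteratedFDeriv_two_apply, fderiv_clm_apply hd (differentiableAt_const _)]
  simp

theorem hasDerivAt_line {f : EuclideanSpace ℝ (Fin N) → ℝ} (hf : ContDiff ℝ 2 f)
    (x ξ : EuclideanSpace ℝ (Fin N)) (τ : ℝ) :
    HasDerivAt (fun τ : ℝ => f (x + τ • ξ)) (fderiv ℝ f (x + τ • ξ) ξ) τ := by
  have h1 : HasDerivAt (fun τ : ℝ => x + τ • ξ) ξ τ := by
    simpa using ((hasDerivAt_id τ).smul_const ξ).const_add x
  exact ((hf.differentiable (by norm_num)) _).hasFDerivAt.comp_hasDerivAt τ h1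

theorem hasDerivAt_line_two {f : EuclideanSpace ℝ (Fin N) → ℝ} (hf : ContDiff ℝ 2 f)
    (x ξ : EuclideanSpace ℝ (Fin N)) :
    HasDerivAt (fun τ : ℝ => fderiv ℝ f (x + τ • ξ) ξ)
      (fderiv ℝ (fun y => fderiv ℝ f y ξ) x ξ) 0 := by
  have h1 : HasDerivAt (fun τ : ℝ => x + τ • ξ) ξ 0 := by
    simpa using ((hasDerivAt_id (0:ℝ)).smul_const ξ).const_add x
  have hd : Differentiable ℝ (fun y => fderiv ℝ f y ξ) :=
    ((hf.fderiv_right (m := 1) (by norm_num)).differentiable (by norm_num)).clm_apply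
      (differentiable_const _)
  have h2 : HasFDerivAt (fun y => fderiv ℝ f y ξ) (fderiv ℝ (fun y => fderiv ℝ f y ξ) x)
      (x + (0:ℝ) • ξ) := by simpa using (hd x).hasFDerivAt
  exact h2.comp_hasDerivAt 0 h1

theorem eventually_line {P : EuclideanSpace ℝ (Fin N) × EuclideanSpace ℝ (Fin N) → Prop} {x y : EuclideanSpace ℝ (Fin N)} (hP : ∀ᶠ p in 𝓝 (x, y), P p) (ξ ζ : EuclideanSpace ℝ (Fin N)) :
    ∀ᶠ τ : ℝ in 𝓝 0, P (x + τ • ξ, y + τ • ζ) := by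
  have hc : Continuous (fun τ : ℝ => ((x + τ • ξ, y + τ • ζ) : EuclideanSpace ℝ (Fin N) × EuclideanSpace ℝ (Fin N))) := by fun_prop
  have := hc.tendsto 0
  simp only [zero_smul, add_zero] at this
  exact this.eventually hP

theorem hasDerivAt_quad (a b c : ℝ) (τ : ℝ) :
    HasDerivAt (fun τ : ℝ => a + b * τ + c * τ ^ 2) (b + 2 * c * τ) τ := by
  have := (((hasDerivAt_id τ).const_mul b).const_add a).add
    (((hasDerivAt_id τ).pow 2).const_mul c)
  refine (this.congr_deriv ?_)
  simp; ring

variable {f : EuclideanSpace ℝ (Fin N) → ℝ} {x y : EuclideanSpace ℝ (Fin N)} {L A ε : ℝ}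

/-- Second-order condition at an off-diagonal local maximum of
`f x - f y - L|x - y| + A|x - y|² - ε|x|²`, with the frame at `y` reflected in `(x - y)ᗮ`. Along
the paired lines `|x - y|` is affine in the parameter, so its coefficient `L` does not contribute,
and `A|x - y|²` contributes `8A` in total. -/
theorem lap_at_max (hf : ContDiff ℝ 2 f) (hxy : x ≠ y)
    (hmax : ∀ᶠ p : EuclideanSpace ℝ (Fin N) × EuclideanSpace ℝ (Fin N) in 𝓝 (x, y),
      f p.1 - f p.2 - L * ‖p.1 - p.2‖ + A * ‖p.1 - p.2‖ ^ 2 - ε * ‖p.1‖ ^ 2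
        ≤ f x - f y - L * ‖x - y‖ + A * ‖x - y‖ ^ 2 - ε * ‖x‖ ^ 2) :
    ∑ i : Fin N, fderiv ℝ (fun y => fderiv ℝ f y (EuclideanSpace.single i 1)) x
        (EuclideanSpace.single i 1)
      - ∑ i : Fin N, fderiv ℝ (fun y => fderiv ℝ f y (EuclideanSpace.single i 1)) y
        (EuclideanSpace.single i 1) + 8 * A - 2 * N * ε ≤ 0 := by
  set z := x - y with hz
  have hz0 : z ≠ 0 := sub_ne_zero.2 hxy
  have hr : 0 < ‖z‖ := norm_pos_iff.2 hz0
  let b : OrthonormalBasis (Fin N) ℝ (EuclideanSpace ℝ (Fin N)) := EuclideanSpace.basisFun (Fin N) ℝ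
  let b' : OrthonormalBasis (Fin N) ℝ (EuclideanSpace ℝ (Fin N)) := b.map (Submodule.reflection (ℝ ∙ z)ᗮ)
  have hb (i) : b i = EuclideanSpace.single i 1 := by simp [b]
  have hb' (i) : b' i = b i - (2 * (inner ℝ z (b i) / ‖z‖ ^ 2)) • z := by
    simp only [b', OrthonormalBasis.map_apply, Submodule.reflection_orthogonal_apply,
      Submodule.reflection_singleton_apply]
    simp [two_smul, two_mul, add_smul]
  simp_rw [← hb]
  rw [sum_second_deriv_basis hf y b, ← sum_second_deriv_basis hf y b']
  have key (i) : fderiv ℝ (fun y => fderiv ℝ f y (b i)) x (b i)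
      - fderiv ℝ (fun y => fderiv ℝ f y (b' i)) y (b' i)
      + (8 * A * (inner ℝ z (b i) ^ 2 / ‖z‖ ^ 2)) - 2 * ε ≤ 0 := by
    set a := inner ℝ z (b i) / ‖z‖ ^ 2 with ha
    have hnorm (τ : ℝ) : ‖x + τ • b i - (y + τ • b' i)‖ = |1 + 2 * a * τ| * ‖z‖ := by
      rw [← Real.norm_eq_abs, ← norm_smul]
      congr 1
      rw [hb']; module
    have hnx (τ : ℝ) : ‖x + τ • b i‖ ^ 2 = ‖x‖ ^ 2 + 2 * inner ℝ x (b i) * τ + τ ^ 2 := by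
      rw [norm_add_sq_real, norm_smul, inner_smul_right, b.norm_eq_one]
      simp; ring
    have hpos : ∀ᶠ τ : ℝ in 𝓝 0, 0 < 1 + 2 * a * τ := by
      have hc : Continuous (fun τ : ℝ => 1 + 2 * a * τ) := by fun_prop
      exact hc.continuousAt.eventually (lt_mem_nhds (by simp))
    -- For small `τ` the norm of the difference is affine, `(1 + 2aτ)‖z‖`, so all other terms are
    -- quadratic in `τ`.
    have hD1 (τ : ℝ) := ((hasDerivAt_line hf x (b i) τ).sub (hasDerivAt_line hf y (b' i) τ)).add
      (hasDerivAt_quad (-L * ‖z‖ + A * ‖z‖ ^ 2 - ε * ‖x‖ ^ 2)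
        (- 2 * L * a * ‖z‖ + 4 * A * a * ‖z‖ ^ 2 - 2 * ε * inner ℝ x (b i))
        (4 * A * a ^ 2 * ‖z‖ ^ 2 - ε) τ)
    have hD2 := ((hasDerivAt_line_two hf x (b i)).sub (hasDerivAt_line_two hf y (b' i))).add
      (hasDerivAt_quad (- 2 * L * a * ‖z‖ + 4 * A * a * ‖z‖ ^ 2 - 2 * ε * inner ℝ x (b i))
        (2 * (4 * A * a ^ 2 * ‖z‖ ^ 2 - ε)) 0 0)
    have := second_deriv_nonpos ?_ hD1 (hD2.congr_of_eventuallyEq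
      (Eventually.of_forall fun τ => by simp))
    · have e : a ^ 2 * ‖z‖ ^ 2 = inner ℝ z (b i) ^ 2 / ‖z‖ ^ 2 := by
        rw [ha]; field_simp
      rw [← e]; linarith
    · filter_upwards [eventually_line hmax (b i) (b' i), hpos] with τ h1 h2
      simp only [hnorm, hnx, abs_of_pos h2] at h1
      simp only [Pi.add_apply, Pi.sub_apply, zero_smul, add_zero]
      linarith
  have hsum := Finset.sum_nonpos fun i (_ : i ∈ Finset.univ) => key i
  rw [Finset.sum_sub_distrib, Finset.sum_add_distrib, Finset.sum_sub_distrib, ← Finset.mul_sum,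
    ← Finset.sum_div, b.sum_sq_inner_left, div_self (by positivity)] at hsum
  simp at hsum
  linarith

/-- First-order condition for moving both points by the same vector, which keeps `x - y` fixed. -/
theorem grad_sub_at_max (hf : ContDiff ℝ 2 f)
    (hmax : ∀ᶠ p : EuclideanSpace ℝ (Fin N) × EuclideanSpace ℝ (Fin N) in 𝓝 (x, y),
      f p.1 - f p.2 - L * ‖p.1 - p.2‖ + A * ‖p.1 - p.2‖ ^ 2 - ε * ‖p.1‖ ^ 2
        ≤ f x - f y - L * ‖x - y‖ + A * ‖x - y‖ ^ 2 - ε * ‖x‖ ^ 2) :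
    gradient f x - gradient f y = (2 * ε) • x := by
  refine ext_inner_right ℝ fun w => ?_
  rw [inner_sub_left, inner_gradient_left, inner_gradient_left, inner_smul_left]
  have hD1 := ((hasDerivAt_line hf x w 0).sub (hasDerivAt_line hf y w 0)).add
      (hasDerivAt_quad (-L * ‖x - y‖ + A * ‖x - y‖ ^ 2 - ε * ‖x‖ ^ 2)
        (- 2 * ε * inner ℝ x w) (-ε * ‖w‖ ^ 2) 0)
  have hm := IsLocalMax.hasDerivAt_eq_zero ?_ hD1
  · simp only [zero_smul, add_zero] at hm
    simp
    linarith
  · filter_upwards [eventually_line hmax w w] with τ h1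
    have hnx : ‖x + τ • w‖ ^ 2 = ‖x‖ ^ 2 + 2 * inner ℝ x w * τ + τ ^ 2 * ‖w‖ ^ 2 := by
      rw [norm_add_sq_real, norm_smul, inner_smul_right, mul_pow]
      simp; ring
    simp only [hnx, add_sub_add_right_eq_sub] at h1
    simp only [Pi.add_apply, Pi.sub_apply, zero_smul, add_zero]
    linarith

/-- The gradient at the unpenalized point `y` is bounded by the Lipschitz constant at `|x - y|`
of `r ↦ L r - A r²`, hence independently of `ε`. -/
theorem norm_grad_at_max (hf : ContDiff ℝ 2 f) (hL : 0 ≤ L) (hA : 0 ≤ A)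
    (hmax : ∀ᶠ p : EuclideanSpace ℝ (Fin N) × EuclideanSpace ℝ (Fin N) in 𝓝 (x, y),
      f p.1 - f p.2 - L * ‖p.1 - p.2‖ + A * ‖p.1 - p.2‖ ^ 2 - ε * ‖p.1‖ ^ 2
        ≤ f x - f y - L * ‖x - y‖ + A * ‖x - y‖ ^ 2 - ε * ‖x‖ ^ 2) :
    ‖gradient f y‖ ≤ L + 2 * A * ‖x - y‖ := by
  have key (w : EuclideanSpace ℝ (Fin N)) : - fderiv ℝ f y w - (L + 2 * A * ‖x - y‖) * ‖w‖ ≤ 0 := by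
    have hD1 := (hasDerivAt_line hf y w 0).neg.add
      (hasDerivAt_quad 0 (- (L + 2 * A * ‖x - y‖) * ‖w‖) (A * ‖w‖ ^ 2) 0)
    have hm := right_deriv_nonpos ?_ hD1
    · simp only [zero_smul, add_zero] at hm
      linarith
    · filter_upwards [(eventually_line hmax 0 w).filter_mono nhdsWithin_le_nhds,
        self_mem_nhdsWithin] with τ h1 h2
      have hτ : 0 < τ := h2
      have e : x - (y + τ • w) = (x - y) - τ • w := by abel
      have hnx : ‖(x - y) - τ • w‖ ^ 2
          = ‖x - y‖ ^ 2 - 2 * inner ℝ (x - y) w * τ + τ ^ 2 * ‖w‖ ^ 2 := by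
        rw [norm_sub_sq_real, norm_smul, inner_smul_right, mul_pow]
        simp; ring
      have hn1 : ‖(x - y) - τ • w‖ ≤ ‖x - y‖ + τ * ‖w‖ := by
        refine (norm_sub_le _ _).trans_eq ?_
        rw [norm_smul, Real.norm_of_nonneg hτ.le]
      have hi : inner ℝ (x - y) w ≤ ‖x - y‖ * ‖w‖ := real_inner_le_norm _ _
      simp only [smul_zero, add_zero, e, hnx] at h1
      simp only [Pi.add_apply, Pi.neg_apply, zero_smul, add_zero]
      have h3 := mul_le_mul_of_nonneg_left hn1 hL
      have h4 := mul_le_mul_of_nonneg_left hi (by positivity : 0 ≤ 2 * A * τ)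
      linarith
  have h := key (- gradient f y)
  rw [map_neg, ← inner_gradient_left, real_inner_self_eq_norm_sq, norm_neg] at h
  by_contra! hc
  have : 0 ≤ L + 2 * A * ‖x - y‖ := by positivity
  nlinarith
end

/-! ### Comparison with the barrier -/

/-- For small `ε` the penalty `ε|x|²` costs at most `η / 2` in the Laplacian, and at most `η / 2` in
the nonlinear term `h|p|^γ` when the gradients `p` of norm `a` and `b` differ by at most `2√(εB)`. -/
theorem exists_penalty {h γ η K B : ℝ} (hγ : 0 ≤ γ) (hη : 0 < η) (hB : 0 ≤ B) (n : ℕ) :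
    ∃ ε₀ > 0, ∀ ε, 0 < ε → ε < ε₀ → 2 * n * ε ≤ η / 2 ∧
      ∀ a b : ℝ, 0 ≤ a → 0 ≤ b → b ≤ K → |a - b| ^ 2 ≤ 4 * ε * B →
        |h * a ^ γ - h * b ^ γ| < η / 2 := by
  have huc : UniformContinuousOn (fun s : ℝ => h * s ^ γ) (Icc 0 (K + 1)) :=
    isCompact_Icc.uniformContinuousOn_of_continuous
      (continuous_const.mul (Real.continuous_rpow_const hγ)).continuousOn
  obtain ⟨δ, hδ, huc⟩ := Metric.uniformContinuousOn_iff.1 huc (η / 2) (by positivity)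
  set d := min δ 1 with hd
  have hd0 : 0 < d := by positivity
  refine ⟨min (d ^ 2 / (4 * B + 1)) (η / (4 * n + 1)), by positivity, fun ε hε hε' => ⟨?_, ?_⟩⟩
  · have := (hε'.trans_le (min_le_right _ _))
    rw [lt_div_iff₀ (by positivity)] at this
    linarith
  · intro a b ha hb hbK hab
    have h1 := (hε'.trans_le (min_le_left _ _))
    rw [lt_div_iff₀ (by positivity)] at h1
    have h2 : |a - b| < d := by
      refine lt_of_pow_lt_pow_left₀ 2 hd0.le ?_
      linarith
    have h3 : |a - b| < δ := h2.trans_le (min_le_left _ _)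
    have h4 : |a - b| < 1 := h2.trans_le (min_le_right _ _)
    have := huc a ⟨ha, by linarith [(abs_lt.1 h4).2]⟩ b ⟨hb, by linarith⟩ (by rwa [Real.dist_eq])
    rwa [Real.dist_eq] at this

section
variable {N : ℕ} {γ h α M : ℝ} {v : EuclideanSpace ℝ (Fin N) × ℝ → ℝ}

/-- The comparison with the barrier `L r + C exp(-4(T - t)/R²)(2R² - r²)` at time `t₀`, up to an
error controlled by `η`; the bound `C(2R² - r²) ≤ 2 M R^α` has been used. -/
theorem comparison (hγ : 0 ≤ γ)
    (hsmooth : ContDiffOn ℝ (⊤ : ℕ∞) v ((univ : Set (EuclideanSpace ℝ (Fin N))) ×ˢ Ioi (0 : ℝ)))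
    (heq : ∀ (x : EuclideanSpace ℝ (Fin N)) (t : ℝ), 0 < t →
      -(timeDeriv v x t) - spatialLap v x t + h * ‖spatialGrad v x t‖ ^ γ = 0)
    (hα : 0 < α) (hM : 0 ≤ M)
    (hv : ∀ (x y : EuclideanSpace ℝ (Fin N)) (t : ℝ), 0 < t →
      v (x, t) - v (y, t) ≤ M * ‖x - y‖ ^ α)
    {R t₀ T η : ℝ} (hR : 0 < R) (ht₀ : 0 < t₀) (hT : t₀ ≤ T) (hη : 0 < η)
    (x y : EuclideanSpace ℝ (Fin N)) (hxy : ‖x - y‖ ≤ R) :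
    v (x, t₀) - v (y, t₀) ≤ M * R ^ α / R * ‖x - y‖
      + 2 * (M * R ^ α) * Real.exp (-(4 / R ^ 2) * (T - t₀)) + η * (T - t₀) + η := by
  set B := M * R ^ α with hBdef
  have hB : 0 ≤ B := by positivity
  set L := B / R with hL
  set C := B / R ^ 2 with hC
  have hL0 : 0 ≤ L := by positivity
  have hC0 : 0 ≤ C := by positivity
  have hLR : L * R = B := by rw [hL]; field_simp
  have hCR : C * R ^ 2 = B := by rw [hC]; field_simp
  obtain ⟨ε₀, hε₀, hpen⟩ := exists_penalty (h := h) (K := L + 2 * C * R) hγ hη hB N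
  obtain ⟨ε, hε, hεlt⟩ := exists_between (show 0 < min ε₀ (η / (‖x‖ ^ 2 + 1)) by positivity)
  have hεx : ε * ‖x‖ ^ 2 ≤ η := by
    have := hεlt.trans_le (min_le_right _ _)
    rw [lt_div_iff₀ (by positivity)] at this
    linarith
  obtain ⟨hN, hpen⟩ := hpen ε hε (hεlt.trans_le (min_le_left _ _))
  let A : ℝ → ℝ := fun t => C * Real.exp (-(4 / R ^ 2) * (T - t))
  have hA0 (t) : 0 ≤ A t := by positivity
  have hAC {t} (ht : t ≤ T) : A t ≤ C := by
    refine mul_le_of_le_one_right hC0 (Real.exp_le_one_iff.2 ?_)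
    have : 0 ≤ 4 / R ^ 2 * (T - t) := mul_nonneg (by positivity) (by linarith)
    linarith
  let Φ : EuclideanSpace ℝ (Fin N) × EuclideanSpace ℝ (Fin N) × ℝ → ℝ := fun p =>
    v (p.1, p.2.2) - v (p.2.1, p.2.2) - L * ‖p.1 - p.2.1‖
      - A p.2.2 * (2 * R ^ 2 - ‖p.1 - p.2.1‖ ^ 2) - ε * ‖p.1‖ ^ 2 - η * (T - p.2.2)
  have hvB {x y : EuclideanSpace ℝ (Fin N)} {t : ℝ} (ht : 0 < t) (hr : ‖x - y‖ ≤ R) :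
      v (x, t) - v (y, t) ≤ B :=
    (hv x y t ht).trans (by rw [hBdef]; gcongr)
  have hbar {r t : ℝ} (hr0 : 0 ≤ r) (hr : r ≤ R) : 0 ≤ A t * (2 * R ^ 2 - r ^ 2) :=
    mul_nonneg (hA0 t) (by nlinarith)
  suffices hmain : Φ (x, y, t₀) ≤ 0 by
    simp only [Φ] at hmain
    have h1 : A t₀ * (2 * R ^ 2 - ‖x - y‖ ^ 2)
        ≤ 2 * B * Real.exp (-(4 / R ^ 2) * (T - t₀)) := by
      rw [← hCR]
      have : 0 ≤ A t₀ * ‖x - y‖ ^ 2 := mul_nonneg (hA0 _) (by positivity)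
      simp only [A] at this ⊢
      linarith
    linarith
  by_contra! hpos
  -- Outside the ball of radius `ρ` the penalty exceeds the bound `B` on `v(x,t) - v(y,t)`.
  set ρ := ‖x‖ + B / ε + 1 with hρ
  have hρ0 : 1 ≤ ρ := by have : 0 ≤ ‖x‖ + B / ε := by positivity
                         linarith
  have hρB : B < ε * ρ ^ 2 := by
    have h1 : B / ε < ρ := by rw [hρ]; linarith [norm_nonneg x]
    rw [div_lt_iff₀ hε] at h1
    nlinarith
  let S : Set (EuclideanSpace ℝ (Fin N) × EuclideanSpace ℝ (Fin N) × ℝ) :=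
    (closedBall 0 ρ ×ˢ closedBall 0 (ρ + R) ×ˢ Icc t₀ T) ∩ {p | ‖p.1 - p.2.1‖ ≤ R}
  have hScomp : IsCompact S :=
    ((isCompact_closedBall _ _).prod ((isCompact_closedBall _ _).prod isCompact_Icc)).inter_right
      (isClosed_le (by fun_prop) continuous_const)
  have hScont : ContinuousOn Φ S := by
    have hvc := hsmooth.continuousOn
    have h1 : ContinuousOn (fun p : EuclideanSpace ℝ (Fin N) × EuclideanSpace ℝ (Fin N) × ℝ =>
        v (p.1, p.2.2)) S := by
      refine hvc.comp (f := fun p : EuclideanSpace ℝ (Fin N) × EuclideanSpace ℝ (Fin N) × ℝ =>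
        (p.1, p.2.2)) (by fun_prop) fun p hp => ⟨mem_univ _, ht₀.trans_le hp.1.2.2.1⟩
    have h2 : ContinuousOn (fun p : EuclideanSpace ℝ (Fin N) × EuclideanSpace ℝ (Fin N) × ℝ =>
        v (p.2.1, p.2.2)) S := by
      refine hvc.comp (f := fun p : EuclideanSpace ℝ (Fin N) × EuclideanSpace ℝ (Fin N) × ℝ =>
        (p.2.1, p.2.2)) (by fun_prop) fun p hp => ⟨mem_univ _, ht₀.trans_le hp.1.2.2.1⟩
    have h3 : Continuous fun p : EuclideanSpace ℝ (Fin N) × EuclideanSpace ℝ (Fin N) × ℝ =>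
        L * ‖p.1 - p.2.1‖ + C * Real.exp (-(4 / R ^ 2) * (T - p.2.2))
          * (2 * R ^ 2 - ‖p.1 - p.2.1‖ ^ 2) + ε * ‖p.1‖ ^ 2 + η * (T - p.2.2) := by fun_prop
    refine ((h1.sub h2).sub h3.continuousOn).congr fun p _ => ?_
    simp only [Φ, A, Pi.sub_apply]
    ring
  have hmemS {p : EuclideanSpace ℝ (Fin N) × EuclideanSpace ℝ (Fin N) × ℝ}
      (h1 : ‖p.1‖ ≤ ρ) (h2 : ‖p.1 - p.2.1‖ ≤ R) (h3 : p.2.2 ∈ Icc t₀ T) : p ∈ S := by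
    refine ⟨⟨by simpa using h1, ?_, h3⟩, h2⟩
    have := norm_sub_norm_le p.2.1 p.1
    rw [norm_sub_rev] at this
    simp only [mem_closedBall, dist_zero_right]
    linarith
  have hx0S : (x, y, t₀) ∈ S :=
    hmemS (by rw [hρ]; have : 0 ≤ B / ε := by positivity
              simp only; linarith) hxy ⟨le_rfl, hT⟩
  obtain ⟨⟨a, b, t⟩, hmem, hmax⟩ := hScomp.exists_isMaxOn ⟨_, hx0S⟩ hScont
  have hΦpos : 0 < Φ (a, b, t) := hpos.trans_le (hmax hx0S)
  have htI : t ∈ Icc t₀ T := hmem.1.2.2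
  have hrR : ‖a - b‖ ≤ R := hmem.2
  have ht0 : 0 < t := ht₀.trans_le htI.1
  -- The maximum over `S` is a maximum over the whole strip `|x - y| ≤ R`.
  have hglob (a' b' : EuclideanSpace ℝ (Fin N)) (t' : ℝ) (hr : ‖a' - b'‖ ≤ R)
      (ht' : t' ∈ Icc t₀ T) : Φ (a', b', t') ≤ Φ (a, b, t) := by
    by_cases ha' : ‖a'‖ ≤ ρ
    · exact hmax (hmemS (p := (a', b', t')) ha' hr ht')
    · refine le_trans ?_ hΦpos.le
      push Not at ha'
      have h1 := hvB (ht₀.trans_le ht'.1) hr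
      have h2 := hbar (t := t') (norm_nonneg _) hr
      have h3 : 0 ≤ η * (T - t') := mul_nonneg hη.le (by linarith [ht'.2])
      have h4 : 0 ≤ L * ‖a' - b'‖ := by positivity
      have h5 : ε * ρ ^ 2 ≤ ε * ‖a'‖ ^ 2 := by gcongr
      simp only [Φ]
      linarith
  have hη1 : 0 ≤ η * (T - t) := mul_nonneg hη.le (by linarith [htI.2])
  have hb1 := hbar (t := t) (norm_nonneg _) hrR
  have hεa0 : 0 ≤ ε * ‖a‖ ^ 2 := by positivity
  have hL1 : 0 ≤ L * ‖a - b‖ := by positivity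
  have hΦpos' := hΦpos
  simp only [Φ] at hΦpos'
  have hεa : ε * ‖a‖ ^ 2 ≤ B := by linarith [hvB ht0 hrR]
  -- The maximum point avoids `x = y`, `|x - y| = R` and `t = T`.
  have hab : a ≠ b := by
    rintro rfl
    linarith
  have hrlt : ‖a - b‖ < R := by
    refine lt_of_le_of_ne hrR fun he => ?_
    have := hvB ht0 hrR
    rw [he] at hΦpos' hb1
    linarith
  have htT : t < T := by
    refine lt_of_le_of_ne htI.2 fun he => ?_
    have h1 := hvB ht0 hrR
    have h2 : A t = C := by simp [A, he]
    rw [h2] at hΦpos'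
    have : C * ‖a - b‖ ^ 2 ≤ C * R ^ 2 := by gcongr
    linarith
  have hslice : ContDiff ℝ 2 (fun z => v (z, t)) := by
    have h1 : ContDiffOn ℝ 2 v (univ ×ˢ Ioi (0 : ℝ)) := 
      contDiffOn_infty.1 hsmooth 2
    rw [← contDiffOn_univ]
    exact h1.comp (f := fun z => (z, t)) (by fun_prop) fun z _ => ⟨mem_univ _, ht0⟩
  have htime (z : EuclideanSpace ℝ (Fin N)) :
      HasDerivAt (fun s => v (z, s)) (timeDeriv v z t) t := by
    have h1 : DifferentiableAt ℝ v (z, t) :=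
      (hsmooth.contDiffAt ((isOpen_univ.prod isOpen_Ioi).mem_nhds
        (show (z, t) ∈ univ ×ˢ Ioi (0 : ℝ) from ⟨mem_univ _, ht0⟩))).differentiableAt (by simp)
    have h2 : DifferentiableAt ℝ (fun s : ℝ => v (z, s)) t :=
      DifferentiableAt.comp (f := fun s : ℝ => (z, s)) t h1 (by fun_prop)
    exact h2.hasDerivAt
  -- At fixed `t` the remaining terms of `Φ` are constant, and `|x - y| < R` near `(a, b)`.
  have hloc : ∀ᶠ p : EuclideanSpace ℝ (Fin N) × EuclideanSpace ℝ (Fin N) in 𝓝 (a, b),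
      v (p.1, t) - v (p.2, t) - L * ‖p.1 - p.2‖ + A t * ‖p.1 - p.2‖ ^ 2 - ε * ‖p.1‖ ^ 2
        ≤ v (a, t) - v (b, t) - L * ‖a - b‖ + A t * ‖a - b‖ ^ 2 - ε * ‖a‖ ^ 2 := by
    have hc : Continuous fun p : EuclideanSpace ℝ (Fin N) × EuclideanSpace ℝ (Fin N) =>
      ‖p.1 - p.2‖ := by fun_prop
    filter_upwards [hc.continuousAt.eventually (gt_mem_nhds hrlt)] with p hp
    have := hglob p.1 p.2 t hp.le htI
    simp only [Φ] at this
    linarith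
  have hlap := lap_at_max hslice hab hloc
  have hgsub := grad_sub_at_max hslice hloc
  have hgb := norm_grad_at_max hslice hL0 (hA0 t) hloc
  have htd := right_deriv_nonpos (f := fun s => Φ (a, b, s)) (a := t)
    (c := timeDeriv v a t - timeDeriv v b t
      - A t * (4 / R ^ 2) * (2 * R ^ 2 - ‖a - b‖ ^ 2) + η) (by
      filter_upwards [Ioo_mem_nhdsGT htT] with s hs
      exact hglob a b s hrR ⟨htI.1.trans hs.1.le, hs.2.le⟩) (by
      have hA' : HasDerivAt A (A t * (4 / R ^ 2)) t := by
        have h1 : HasDerivAt (fun s : ℝ => -(4 / R ^ 2) * (T - s)) (4 / R ^ 2) t := by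
          have := ((hasDerivAt_id t).const_sub T).const_mul (-(4 / R ^ 2))
          simpa using this
        exact (h1.exp.const_mul C).congr_deriv (by simp only [A]; ring)
      have h2 : HasDerivAt (fun s : ℝ => η * (T - s)) (-η) t := by
        have := ((hasDerivAt_id t).const_sub T).const_mul η
        simpa using this
      have := (((((htime a).sub (htime b)).sub_const (L * ‖a - b‖)).sub
        (hA'.mul_const (2 * R ^ 2 - ‖a - b‖ ^ 2))).sub_const (ε * ‖a‖ ^ 2)).sub h2
      exact this.congr_deriv (by ring))
  have hg : |h * ‖spatialGrad v a t‖ ^ γ - h * ‖spatialGrad v b t‖ ^ γ| < η / 2 := by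
    refine hpen _ _ (norm_nonneg _) (norm_nonneg _) (hgb.trans ?_) ?_
    · have : A t * ‖a - b‖ ≤ C * R := mul_le_mul (hAC htI.2) hrR (norm_nonneg _) hC0
      linarith
    · have h1 : |‖spatialGrad v a t‖ - ‖spatialGrad v b t‖| ≤ 2 * ε * ‖a‖ := by
        refine (abs_norm_sub_norm_le _ _).trans_eq ?_
        rw [spatialGrad, spatialGrad, hgsub, norm_smul, Real.norm_of_nonneg (by positivity)]
      calc _ ≤ (2 * ε * ‖a‖) ^ 2 := by gcongr
        _ = 4 * ε * (ε * ‖a‖ ^ 2) := by ring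
        _ ≤ 4 * ε * B := by gcongr
  -- The choice `λ = 4 / R²` makes the barrier a supersolution.
  have hsup : A t * (4 / R ^ 2) * (2 * R ^ 2 - ‖a - b‖ ^ 2) ≤ 8 * A t := by
    have h1 : A t * (4 / R ^ 2) * (2 * R ^ 2) = 8 * A t := by field_simp; ring
    have h2 : 0 ≤ A t * (4 / R ^ 2) * ‖a - b‖ ^ 2 :=
      mul_nonneg (mul_nonneg (hA0 t) (by positivity)) (by positivity)
    linarith
  have e1 := heq a t ht0
  have e2 := heq b t ht0
  change spatialLap v a t - spatialLap v b t + 8 * A t - 2 * N * ε ≤ 0 at hlap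
  have := (abs_lt.1 hg).1
  linarith

/-- The limits `η → 0`, `T → ∞`, `R → ∞` in `comparison`; sublinearity `α < 1` enters in the last one. -/
theorem space_const (hγ : 0 ≤ γ)
    (hsmooth : ContDiffOn ℝ (⊤ : ℕ∞) v ((univ : Set (EuclideanSpace ℝ (Fin N))) ×ˢ Ioi (0 : ℝ)))
    (heq : ∀ (x : EuclideanSpace ℝ (Fin N)) (t : ℝ), 0 < t →
      -(timeDeriv v x t) - spatialLap v x t + h * ‖spatialGrad v x t‖ ^ γ = 0)
    (hα : 0 < α) (hα1 : α < 1) (hM : 0 ≤ M)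
    (hv : ∀ (x y : EuclideanSpace ℝ (Fin N)) (t : ℝ), 0 < t →
      v (x, t) - v (y, t) ≤ M * ‖x - y‖ ^ α)
    (x y : EuclideanSpace ℝ (Fin N)) (t : ℝ) (ht : 0 < t) : v (x, t) - v (y, t) ≤ 0 := by
  have h1 {R T : ℝ} (hR : 0 < R) (hr : ‖x - y‖ ≤ R) (hT : t ≤ T) :
      v (x, t) - v (y, t) ≤ M * R ^ α / R * ‖x - y‖
      + 2 * (M * R ^ α) * Real.exp (-(4 / R ^ 2) * (T - t)) := by
    have hc : Continuous fun η : ℝ => M * R ^ α / R * ‖x - y‖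
      + 2 * (M * R ^ α) * Real.exp (-(4 / R ^ 2) * (T - t)) + η * (T - t) + η := by fun_prop
    have hlim := (hc.tendsto 0).mono_left (nhdsWithin_le_nhds (s := Ioi 0))
    simp only [zero_mul, add_zero] at hlim
    refine ge_of_tendsto hlim ?_
    filter_upwards [self_mem_nhdsWithin] with η hη
    exact comparison hγ hsmooth heq hα hM hv hR ht hT hη x y hr
  have h2 {R : ℝ} (hR : 0 < R) (hr : ‖x - y‖ ≤ R) :
      v (x, t) - v (y, t) ≤ M * R ^ α / R * ‖x - y‖ := by
    have hlin : Tendsto (fun T : ℝ => -(4 / R ^ 2) * (T - t)) atTop atBot :=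
      (tendsto_atTop_add_const_right _ (-t) tendsto_id).const_mul_atTop_of_neg
        (by have : 0 < 4 / R ^ 2 := by positivity
            linarith)
    have hlim := ((Real.tendsto_exp_atBot.comp hlin).const_mul (2 * (M * R ^ α))).const_add
      (M * R ^ α / R * ‖x - y‖)
    rw [mul_zero, add_zero] at hlim
    refine ge_of_tendsto hlim ?_
    filter_upwards [eventually_ge_atTop t] with T hT using h1 hR hr hT
  have hlim : Tendsto (fun R : ℝ => M * R ^ (-(1 - α)) * ‖x - y‖) atTop (𝓝 0) := by
    simpa using ((tendsto_rpow_neg_atTop (by linarith : 0 < 1 - α)).const_mul M).mul_const ‖x - y‖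
  refine ge_of_tendsto hlim ?_
  filter_upwards [eventually_ge_atTop ‖x - y‖, eventually_gt_atTop 0] with R hR hR0
  refine (h2 hR0 hR).trans_eq ?_
  rw [neg_sub, Real.rpow_sub_one hR0.ne']
  ring
end

/-! ### Conclusion -/

/-- **Liouville theorem** (Theorem 4.1): a smooth entire solution of
`-∂ₜv - Δv + h|Dv|^γ = 0` on `ℝ^N × (0,∞)` with `h ≠ 0`, whose parabolic `α`-Hölder
quotient is globally finite for some `0 < α < 1`, is constant. -/
theorem liouville
    (N : ℕ) (hN : 1 ≤ N) (γ : ℝ) (hγ : 2 < γ) (h : ℝ) (hh : h ≠ 0)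
    (v : EuclideanSpace ℝ (Fin N) × ℝ → ℝ)
    (hsmooth : ContDiffOn ℝ (⊤ : ℕ∞) v ((univ : Set (EuclideanSpace ℝ (Fin N))) ×ˢ Ioi (0 : ℝ)))
    (heq : ∀ (x : EuclideanSpace ℝ (Fin N)) (t : ℝ), 0 < t →
      -(timeDeriv v x t) - spatialLap v x t + h * ‖spatialGrad v x t‖ ^ γ = 0)
    (α : ℝ) (hα0 : 0 < α) (hα1 : α < 1)
    (hgrowth : ∃ M : ℝ, ∀ (x x' : EuclideanSpace ℝ (Fin N)) (t t' : ℝ), 0 < t → 0 < t' →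
      |v (x, t) - v (x', t')| ≤ M * (‖x - x'‖ ^ α + |t - t'| ^ (α / 2))) :
    ∀ (x x' : EuclideanSpace ℝ (Fin N)) (t t' : ℝ), 0 < t → 0 < t' →
      v (x, t) = v (x', t') := by
  obtain ⟨M, hM⟩ := hgrowth
  have hv (x y : EuclideanSpace ℝ (Fin N)) (t : ℝ) (ht : 0 < t) :
      v (x, t) - v (y, t) ≤ |M| * ‖x - y‖ ^ α := by
    have h1 := hM x y t t ht ht
    rw [sub_self, abs_zero, Real.zero_rpow (by positivity), add_zero] at h1
    refine (le_abs_self _).trans (h1.trans ?_)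
    gcongr
    exact le_abs_self M
  have hspace (x y : EuclideanSpace ℝ (Fin N)) (t : ℝ) (ht : 0 < t) : v (x, t) = v (y, t) :=
    le_antisymm
      (sub_nonpos.1 (space_const (by linarith) hsmooth heq hα0 hα1 (abs_nonneg M) hv x y t ht))
      (sub_nonpos.1 (space_const (by linarith) hsmooth heq hα0 hα1 (abs_nonneg M) hv y x t ht))
  intro x x' t t' ht ht'
  rw [hspace x x' t ht]
  refine isOpen_Ioi.is_const_of_fderiv_eq_zero (f := fun s => v (x', s)) (𝕜 := ℝ)
    isPreconnected_Ioi ?_ ?_ ht ht'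
  · intro s hs
    have h1 : DifferentiableWithinAt ℝ v (univ ×ˢ Ioi 0) (x', s) :=
      hsmooth.differentiableOn (by simp) _ ⟨mem_univ _, hs⟩
    exact h1.comp (f := fun s : ℝ => (x', s)) s (by fun_prop) fun r hr => ⟨mem_univ _, hr⟩
  · intro s hs
    have hs0 : 0 < s := hs
    have hc : (fun z => v (z, s)) = fun _ => v (x', s) := funext fun z => hspace z x' s hs0
    have h1 := heq x' s hs0
    have hg : spatialGrad v x' s = 0 := by rw [spatialGrad, hc]; simp
    have hl : spatialLap v x' s = 0 := by
      rw [spatialLap, hc]; simp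
    rw [hg, hl, norm_zero, Real.zero_rpow (by linarith)] at h1
    have h2 : deriv (fun s => v (x', s)) s = 0 := by
      have : timeDeriv v x' s = 0 := by linarith
      exact this
    ext
    simp [h2]
end
end

section
/- Let N ≥ 1, γ > 2, and let h ∈ ℝ with h ≠ 0. Let v : ℝ^N × (0,∞) → ℝ be a smooth (C^∞) function satisfying −∂ₜv(x,t) − Δv(x,t) + h |Dv(x,t)|^γ = 0 at every point (x,t) ∈ ℝ^N × (0,∞). Suppose that for some α ∈ (0,1) and some β > 0 the quantity sup { |v(x,t) − v(x',t')| / (|x − x'|^α + |t − t'|^β + 1) : (x,t), (x',t') ∈ ℝ^N × (0,∞) } is finite. Then v is constant on ℝ^N × (0,∞). -/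
open Set Metric

noncomputable section

/-!
Fix `δ, τ > 0` and double the space variable: the claim is that
`v (x, t) - v (y, t) ≤ δ * B |x - y|` for `t ≥ τ`, where `B` is a Lipschitz, strictly concave
function with `r ≤ B r`. Letting `δ → 0`, `v` depends on `t` alone, and then the equation reduces to
`∂ₜ v = 0`.

If the claim fails, then for small `ε > 0` the functional
`v (x, t) - v (y, t) - δ * B |x - y| - ε ⟨x⟩ - ε t` takes a positive value. The sublinear growth of
`v` in space makes it negative outside a compact set, so it has a positive maximum `(x, y, t)`. There
`x ≠ y`, and `|x - y| ≤ R₀` with `R₀` independent of `ε`. At this point: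

* the gradients at `x` and `y` are bounded by `2 δ + ε` and differ by at most `ε`, so the two
  Hamiltonian terms cancel up to `O(ε)` (`gradient_bounds`, `abs_rpow_sub_rpow_le`);
* coupling the second variations at `x` and `y` by the reflection exchanging the two points gives
  `Δv(x) - Δv(y) ≤ -8 δ / (1 + |x - y|)³ + N ε` (`sum_hessian_sub_le`);
* since later times do not increase the functional, `∂ₜ v(x) - ∂ₜ v(y) ≤ ε`.

Subtracting the equations at `x` and `y` gives `8 δ / (1 + R₀)³ ≤ O(ε)`, a contradiction: the constant
in `O(ε)` depends only on `γ`, `h`, `δ`, `N`.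
-/

/-! ### One-dimensional derivative tests -/

/-- One-dimensional second derivative test in terms of symmetric second differences. It only sees the
comparison function through its second differences, so the barriers need not be differentiated. -/
lemma second_deriv_le_of_second_difference_le {F F' : ℝ → ℝ} {F'' K : ℝ}
    (h1 : ∀ σ, HasDerivAt F (F' σ) σ) (h2 : HasDerivAt F' F'' 0)
    (hK : ∀ᶠ σ in nhds (0 : ℝ), F σ + F (-σ) - 2 * F 0 ≤ K * σ ^ 2) : F'' ≤ K := by
  set G : ℝ → ℝ := fun σ => F σ + F (-σ) - 2 * F 0 - K * σ ^ 2 with hG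
  have hG1 : ∀ σ, HasDerivAt G (F' σ - F' (-σ) - 2 * K * σ) σ := by
    intro σ
    have hneg : HasDerivAt (fun s : ℝ => F (-s)) (F' (-σ) * (-1)) σ :=
      (h1 (-σ)).comp σ (hasDerivAt_neg σ)
    have := (((h1 σ).add hneg).sub_const (2 * F 0)).sub ((hasDerivAt_pow 2 σ).const_mul K)
    exact this.congr_deriv (by norm_num; ring)
  have hd : deriv G = fun σ => F' σ - F' (-σ) - 2 * K * σ := funext fun σ => (hG1 σ).deriv
  have hG2 : HasDerivAt (deriv G) (2 * F'' - 2 * K) 0 := by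
    rw [hd]
    have h2' : HasDerivAt F' F'' (-0) := by simpa using h2
    have hneg : HasDerivAt (fun s : ℝ => F' (-s)) (F'' * (-1)) 0 :=
      h2'.comp 0 (hasDerivAt_neg 0)
    have := (h2.sub hneg).sub ((hasDerivAt_id (0 : ℝ)).const_mul (2 * K))
    exact this.congr_deriv (by ring)
  -- If the second derivative of `G` at `0` is positive then `0` is a local minimum of `G`; being
  -- also a local maximum, it forces `G` to be locally constant.
  by_contra! hlt
  have hmin : IsLocalMin G 0 := by
    apply isLocalMin_of_deriv_deriv_pos
    · rw [hG2.deriv]; linarith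
    · rw [hd]; simp
    · exact (hG1 0).continuousAt
  have hmax : ∀ᶠ σ in nhds (0 : ℝ), G σ ≤ G 0 := by
    filter_upwards [hK] with σ hσ
    simp only [hG]; simp; linarith
  have hc : G =ᶠ[nhds 0] fun _ => G 0 := by
    filter_upwards [hmin, hmax] with σ a b using le_antisymm b a
  have h0 : deriv (deriv G) 0 = 0 := by
    rw [hc.deriv.deriv_eq]; simp
  rw [hG2.deriv] at h0
  linarith

/-- One-sided first derivative test. Only increments to the right of `a` are used, so it applies to a
maximum attained on the initial time slice. -/
lemma deriv_le_of_right_slope_le {G : ℝ → ℝ} {G' a K : ℝ} (hG : HasDerivAt G G' a)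
    (h : ∀ s, a < s → G s - G a ≤ K * (s - a)) : G' ≤ K := by
  have ht := (hasDerivAt_iff_tendsto_slope.1 hG).mono_left
    (nhdsWithin_mono a fun s (hs : s ∈ Set.Ioi a) => (ne_of_gt hs : s ≠ a))
  refine le_of_tendsto ht ?_
  filter_upwards [self_mem_nhdsWithin] with s hs
  have hs' : 0 < s - a := sub_pos.2 hs
  rw [slope_def_field, div_le_iff₀ hs']
  exact h s hs

section Lines

variable {E : Type*} [NormedAddCommGroup E] [InnerProductSpace ℝ E]

lemma hasDerivAt_line_s5 {F : Type*} [NormedAddCommGroup F] [NormedSpace ℝ F] {f : E → F}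
    (hf : Differentiable ℝ f) (x w : E) (σ : ℝ) :
    HasDerivAt (fun s : ℝ => f (x + s • w)) (fderiv ℝ f (x + σ • w) w) σ := by
  have h1 : HasDerivAt (fun s : ℝ => x + s • w) w σ := by
    simpa using ((hasDerivAt_id σ).smul_const w).const_add x
  exact (hf _).hasFDerivAt.comp_hasDerivAt σ h1

/-- A one-sided Lipschitz bound at `x` controls the gradient: test it along the gradient itself. -/
lemma norm_gradient_le_of_increment_le [CompleteSpace E] {f : E → ℝ} (hf : Differentiable ℝ f)
    {x : E} {K : ℝ} (hK : 0 ≤ K) (h : ∀ w, f (x + w) - f x ≤ K * ‖w‖) : ‖gradient f x‖ ≤ K := by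
  have key : ∀ w, fderiv ℝ f x w ≤ K * ‖w‖ := by
    intro w
    have := hasDerivAt_line_s5 hf x w 0
    simp only [zero_smul, add_zero] at this
    refine deriv_le_of_right_slope_le this fun s hs => ?_
    have h' := h (s • w)
    rw [norm_smul, Real.norm_of_nonneg hs.le] at h'
    simp only [zero_smul, add_zero, sub_zero]
    linarith
  have h1 := key (gradient f x)
  have h2 : fderiv ℝ f x (gradient f x) = ‖gradient f x‖ ^ 2 := by
    rw [← real_inner_self_eq_norm_sq]
    exact (InnerProductSpace.toDual_symm_apply (𝕜 := ℝ)).symm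
  rcases (norm_nonneg (gradient f x)).eq_or_lt with h0 | h0
  · rwa [← h0]
  · nlinarith

end Lines

/-! ### Penalty and barrier functions -/

section Radial

variable {E : Type*} [NormedAddCommGroup E]

/-- The function `⟨x⟩ = (1 + |x|²)^{1/2}`: it tends to infinity with `x`, is `1`-Lipschitz and has
bounded second differences. Small multiples of it force maxima to exist. -/
def jap (x : E) : ℝ := √(1 + ‖x‖ ^ 2)

lemma norm_le_jap (x : E) : ‖x‖ ≤ jap x := Real.le_sqrt_of_sq_le (by linarith)

lemma one_le_jap (x : E) : 1 ≤ jap x := Real.le_sqrt_of_sq_le (by nlinarith [norm_nonneg x])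

lemma jap_sq (x : E) : jap x ^ 2 = 1 + ‖x‖ ^ 2 := Real.sq_sqrt (by positivity)

lemma jap_sub_le (x w : E) : jap (x + w) - jap x ≤ ‖w‖ := by
  have h : jap (x + w) ≤ jap x + ‖w‖ := by
    apply Real.sqrt_le_iff.2 ⟨by linarith [one_le_jap x, norm_nonneg w], ?_⟩
    have := norm_add_le x w
    nlinarith [jap_sq x, norm_le_jap x, norm_nonneg w, norm_nonneg x, norm_nonneg (x + w)]
  linarith

end Radial

section Space

variable {E : Type*} [NormedAddCommGroup E] [InnerProductSpace ℝ E]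

lemma jap_second_difference_le (x w : E) :
    jap (x + w) + jap (x - w) - 2 * jap x ≤ ‖w‖ ^ 2 := by
  have hp := parallelogram_law_with_norm ℝ x w
  have h1 := jap_sq (x + w)
  have h2 := jap_sq (x - w)
  have h3 := jap_sq x
  have h4 := one_le_jap x
  have h : jap (x + w) + jap (x - w) ≤ 2 * jap x + ‖w‖ ^ 2 := by
    refine abs_le_of_sq_le_sq' ?_ (by linarith [sq_nonneg ‖w‖]) |>.2
    nlinarith [sq_nonneg (jap (x + w) - jap (x - w)), sq_nonneg (‖w‖ ^ 2), sq_nonneg ‖w‖]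
  linarith

end Space

/-- The concave function `r ↦ r + r / (1 + r)` on `[0, ∞)`, written as `r + 1 - 1 / (1 + r)`. It
vanishes at `0`, dominates `r`, is `2`-Lipschitz, and its second derivative `-2 / (1 + r)³` is
strictly negative. -/
def barrier (r : ℝ) : ℝ := r + 1 - 1 / (1 + r)

lemma le_barrier {r : ℝ} (hr : 0 ≤ r) : r ≤ barrier r := by
  have : 1 / (1 + r) ≤ 1 := by rw [div_le_one (by linarith)]; linarith
  unfold barrier; linarith

lemma barrier_sub_le {r s : ℝ} (hr : 0 ≤ r) (hs : 0 ≤ s) : barrier s - barrier r ≤ 2 * |s - r| := by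
  have h : 1 / (1 + r) - 1 / (1 + s) ≤ |s - r| := by
    rw [div_sub_div _ _ (by linarith) (by linarith), div_le_iff₀ (by positivity)]
    nlinarith [le_abs_self (s - r), abs_nonneg (s - r), mul_nonneg hr hs,
      mul_nonneg (abs_nonneg (s - r)) (mul_nonneg hr hs), mul_nonneg (abs_nonneg (s - r)) hr,
      mul_nonneg (abs_nonneg (s - r)) hs]
  unfold barrier
  linarith [le_abs_self (s - r)]

lemma barrier_second_difference_le {r s : ℝ} (hr : 0 < r) (hs : |s| < r) :
    barrier (r + s) + barrier (r - s) - 2 * barrier r ≤ -2 * s ^ 2 / (1 + r) ^ 3 := by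
  obtain ⟨h1, h2⟩ := abs_lt.1 hs
  have ha : 0 < 1 + (r + s) := by linarith
  have hb : 0 < 1 + (r - s) := by linarith
  have hc : 0 < 1 + r := by linarith
  have e : barrier (r + s) + barrier (r - s) - 2 * barrier r
      = -2 * s ^ 2 / ((1 + r) * ((1 + (r + s)) * (1 + (r - s)))) := by
    unfold barrier; field_simp; ring
  rw [e, neg_mul, neg_div, neg_div, neg_le_neg_iff]
  apply div_le_div_of_nonneg_left (by positivity) (by positivity)
  have : (1 + (r + s)) * (1 + (r - s)) ≤ (1 + r) ^ 2 := by nlinarith [sq_nonneg s]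
  nlinarith

/-! ### First- and second-order conditions at a maximum of the doubled functional -/

/-- The Laplacian is the trace of the Hessian in any orthonormal basis. -/
lemma spatialLap_eq_sum {N : ℕ} (v : EuclideanSpace ℝ (Fin N) × ℝ → ℝ)
    (x : EuclideanSpace ℝ (Fin N)) (t : ℝ) (hv : ContDiff ℝ 2 fun z => v (z, t))
    (b : OrthonormalBasis (Fin N) ℝ (EuclideanSpace ℝ (Fin N))) :
    spatialLap v x t = ∑ i, fderiv ℝ (fderiv ℝ fun z => v (z, t)) x (b i) (b i) := by
  have hd : Differentiable ℝ (fderiv ℝ fun z => v (z, t)) :=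
    (hv.fderiv_right (m := 1) (by norm_num)).differentiable (by norm_num)
  have key : ∀ b : OrthonormalBasis (Fin N) ℝ (EuclideanSpace ℝ (Fin N)),
      Laplacian.laplacian (fun z => v (z, t)) x
        = ∑ i, fderiv ℝ (fderiv ℝ fun z => v (z, t)) x (b i) (b i) := by
    intro b
    rw [InnerProductSpace.laplacian_eq_iteratedFDeriv_orthonormalBasis _ b]
    simp [iteratedFDeriv_two_apply]
  rw [← key b, key (EuclideanSpace.basisFun (Fin N) ℝ), spatialLap]
  refine Finset.sum_congr rfl fun i _ => ?_
  rw [EuclideanSpace.basisFun_apply, fderiv_clm_apply (hd x) (differentiableAt_const _)]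
  simp

/-- Second-order information at a maximum of the doubled functional with `x ≠ y`, by coupling through
the reflection `R` in the hyperplane orthogonal to `x - y`: moving `x` by `σ w` and `y` by `σ R w`
changes `x - y` only in length, by `2 σ ⟪e, w⟫` with `e = (x - y) / |x - y|`. Summing over an
orthonormal basis of directions `w`, the strict concavity of `barrier` yields a negative term. -/
lemma sum_hessian_sub_le {N : ℕ} {f : EuclideanSpace ℝ (Fin N) → ℝ} (hf : ContDiff ℝ 2 f)
    {δ ε : ℝ} (hδ : 0 < δ) (hε : 0 < ε) {x y : EuclideanSpace ℝ (Fin N)} (hxy : x ≠ y)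
    (hmax : ∀ x' y', f x' - f y' - δ * barrier ‖x' - y'‖ - ε * jap x'
      ≤ f x - f y - δ * barrier ‖x - y‖ - ε * jap x) :
    ∃ b b' : OrthonormalBasis (Fin N) ℝ (EuclideanSpace ℝ (Fin N)),
      ∑ i, fderiv ℝ (fderiv ℝ f) x (b i) (b i) - ∑ i, fderiv ℝ (fderiv ℝ f) y (b' i) (b' i)
        ≤ -(8 * δ / (1 + ‖x - y‖) ^ 3) + N * ε := by
  set r := ‖x - y‖ with hr
  have hr0 : 0 < r := norm_pos_iff.2 (sub_ne_zero.2 hxy)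
  set e := r⁻¹ • (x - y) with he
  have hre : x - y = r • e := by rw [he, smul_smul, mul_inv_cancel₀ hr0.ne', one_smul]
  have hne : ‖e‖ = 1 := by
    rw [he, norm_smul, Real.norm_of_nonneg (by positivity), ← hr, inv_mul_cancel₀ hr0.ne']
  set b := EuclideanSpace.basisFun (Fin N) ℝ with hb
  set R := (Submodule.span ℝ {e})ᗮ.reflection with hR
  have hRa : ∀ w, w - R w = (2 * inner ℝ e w) • e := by
    intro w
    rw [hR, Submodule.reflection_orthogonal_apply, Submodule.reflection_singleton_apply]
    simp [hne, two_smul, two_mul, add_smul]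
  -- Since `R` is an isometry, both `b` and its image under `R` are orthonormal bases.
  refine ⟨b, b.map R, ?_⟩
  have hd1 : Differentiable ℝ f := hf.differentiable (by norm_num)
  have hd2 : Differentiable ℝ (fderiv ℝ f) :=
    (hf.fderiv_right (m := 1) (by norm_num)).differentiable (by norm_num)
  have key : ∀ w, ‖w‖ = 1 → fderiv ℝ (fderiv ℝ f) x w w - fderiv ℝ (fderiv ℝ f) y (R w) (R w)
      ≤ -(8 * δ / (1 + r) ^ 3) * (inner ℝ e w) ^ 2 + ε := by
    intro w hw
    set c : ℝ := inner ℝ e w with hc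
    have hder : ∀ z u : EuclideanSpace ℝ (Fin N), HasDerivAt
        (fun s : ℝ => fderiv ℝ f (z + s • u) u) (fderiv ℝ (fderiv ℝ f) z u u) 0 := by
      intro z u
      have := hasDerivAt_line_s5 hd2 z u 0
      simp only [zero_smul, add_zero] at this
      simpa using this.clm_apply (hasDerivAt_const (0 : ℝ) u)
    refine second_deriv_le_of_second_difference_le
      (F := fun σ : ℝ => f (x + σ • w) - f (y + σ • R w))
      (fun σ => (hasDerivAt_line_s5 hd1 x w σ).sub (hasDerivAt_line_s5 hd1 y (R w) σ))
      ((hder x w).sub (hder y (R w))) ?_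
    have hsmall : ∀ᶠ σ in nhds (0 : ℝ), |2 * σ * c| < r := by
      have : Continuous fun σ : ℝ => |2 * σ * c| := by fun_prop
      exact this.continuousAt.eventually_lt continuousAt_const (by simpa using hr0)
    filter_upwards [hsmall] with σ hσ
    have hnorm : ∀ s : ℝ, |2 * s * c| < r →
        ‖(x + s • w) - (y + s • R w)‖ = r + 2 * s * c := by
      intro s hs
      have : (x + s • w) - (y + s • R w) = (r + 2 * s * c) • e := by
        calc _ = (x - y) + s • (w - R w) := by module
          _ = _ := by rw [hRa, hre]; module
      rw [this, norm_smul, hne, mul_one, Real.norm_of_nonneg]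
      linarith [(abs_lt.1 hs).1]
    have m1 := hmax (x + σ • w) (y + σ • R w)
    have m2 := hmax (x + (-σ) • w) (y + (-σ) • R w)
    rw [hnorm σ hσ] at m1
    rw [hnorm (-σ) (by simpa [abs_mul] using hσ)] at m2
    have hB := mul_le_mul_of_nonneg_left (barrier_second_difference_le hr0 hσ) hδ.le
    have hJ := mul_le_mul_of_nonneg_left (jap_second_difference_le x (σ • w)) hε.le
    rw [norm_smul, hw, mul_one, Real.norm_eq_abs, sq_abs] at hJ
    have e1 : x + (-σ) • w = x - σ • w := by module
    have e2 : r + 2 * (-σ) * c = r - 2 * σ * c := by ring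
    rw [e2, e1] at m2
    have e3 : δ * (-2 * (2 * σ * c) ^ 2 / (1 + r) ^ 3)
        = -(8 * δ / (1 + r) ^ 3) * c ^ 2 * σ ^ 2 := by ring
    rw [e3] at hB
    simp only [zero_smul, add_zero, e1]
    linarith
  rw [← Finset.sum_sub_distrib]
  calc _ ≤ ∑ i, (-(8 * δ / (1 + r) ^ 3) * (inner ℝ e (b i)) ^ 2 + ε) := by
        refine Finset.sum_le_sum fun i _ => ?_
        simpa using key (b i) (b.norm_eq_one i)
    _ = _ := by
        rw [Finset.sum_add_distrib, ← Finset.mul_sum, b.sum_sq_inner_left e, hne]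
        simp

/-- First-order information at a maximum of the doubled functional. Moving `y` alone bounds the
gradient at `y` by the Lipschitz constant of the barrier; moving `x` and `y` together shows that
the two gradients differ by at most `ε`. -/
lemma gradient_bounds {E : Type*} [NormedAddCommGroup E] [InnerProductSpace ℝ E] [CompleteSpace E]
    {f : E → ℝ} (hf : Differentiable ℝ f) {δ ε : ℝ} (hδ : 0 < δ) (hε : 0 < ε) {x y : E}
    (hmax : ∀ x' y', f x' - f y' - δ * barrier ‖x' - y'‖ - ε * jap x'
      ≤ f x - f y - δ * barrier ‖x - y‖ - ε * jap x) :
    ‖gradient f y‖ ≤ 2 * δ ∧ ‖gradient f x - gradient f y‖ ≤ ε := by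
  have grad_sub : ∀ {g k : E → ℝ} {z : E}, DifferentiableAt ℝ g z → DifferentiableAt ℝ k z →
      gradient (fun w => g w - k w) z = gradient g z - gradient k z := by
    intro g k z hg hk
    simp only [gradient]
    rw [fderiv_fun_sub hg hk, map_sub]
  constructor
  · have h0 : gradient (fun w => 0 - f w) y = -gradient f y := by
      rw [grad_sub (by fun_prop) (hf y)]
      simp [gradient]
    rw [← norm_neg, ← h0]
    refine norm_gradient_le_of_increment_le (by fun_prop) (by positivity) fun w => ?_
    have h1 := hmax x (y + w)
    have h2 := mul_le_mul_of_nonneg_left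
      (barrier_sub_le (norm_nonneg (x - y)) (norm_nonneg (x - (y + w)))) hδ.le
    have h3 : |‖x - (y + w)‖ - ‖x - y‖| ≤ ‖w‖ := by
      refine (abs_norm_sub_norm_le _ _).trans_eq ?_
      rw [← norm_neg w]; congr 1; abel
    nlinarith
  · have hgx : gradient (fun w => f (x + w)) 0 = gradient f x := by
      simp only [gradient]
      rw [fderiv_comp_add_left]; simp
    have hgy : gradient (fun w => f (y + w)) 0 = gradient f y := by
      simp only [gradient]
      rw [fderiv_comp_add_left]; simp
    have hdx : Differentiable ℝ fun w => f (x + w) := by fun_prop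
    have hdy : Differentiable ℝ fun w => f (y + w) := by fun_prop
    rw [← hgx, ← hgy, ← grad_sub (hdx 0) (hdy 0)]
    refine norm_gradient_le_of_increment_le (by fun_prop) hε.le fun w => ?_
    have h1 := hmax (x + w) (y + w)
    rw [add_sub_add_right_eq_sub] at h1
    have h2 := mul_le_mul_of_nonneg_left (jap_sub_le x w) hε.le
    simp only [zero_add, add_zero]
    linarith

/-! ### Elementary power estimates -/

lemma abs_rpow_sub_rpow_le {γ B a b : ℝ} (hγ : 1 ≤ γ) (ha : a ∈ Icc 0 B) (hb : b ∈ Icc 0 B) :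
    |a ^ γ - b ^ γ| ≤ γ * B ^ (γ - 1) * |a - b| := by
  have := (convex_Icc 0 B).norm_image_sub_le_of_norm_hasDerivWithin_le
    (f := fun s : ℝ => s ^ γ) (f' := fun s => γ * s ^ (γ - 1)) (C := γ * B ^ (γ - 1))
    (fun s _ => (Real.hasDerivAt_rpow_const (Or.inr hγ)).hasDerivWithinAt) ?_ hb ha
  · simpa [Real.norm_eq_abs] using this
  · intro s hs
    have h0 := hs.1
    rw [Real.norm_of_nonneg (by positivity)]
    gcongr
    · exact hs.2

/-- Sublinear growth is dominated by any linear growth, up to an additive constant. -/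
lemma exists_growth_le {α C δ : ℝ} (hα0 : 0 < α) (hα1 : α < 1) (hC : 0 ≤ C) (hδ : 0 < δ) :
    ∃ A : ℝ, 0 ≤ A ∧ ∀ r : ℝ, 0 ≤ r → C * (r ^ α + 1) ≤ δ * r + A := by
  have hκ : 0 < δ / (C + 1) := by positivity
  obtain ⟨m, hm⟩ := Filter.eventually_atTop.1
    ((tendsto_rpow_neg_atTop (sub_pos.2 hα1)).eventually_le_const hκ)
  set m' := max m 1
  refine ⟨C * (m' ^ α + 1), by positivity, fun r hr => ?_⟩
  rcases le_total r m' with h | h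
  · have : r ^ α ≤ m' ^ α := by gcongr
    nlinarith [mul_le_mul_of_nonneg_left this hC, mul_nonneg hδ.le hr]
  · have h1 := hm r ((le_max_left _ _).trans h)
    have hr1 : 0 < r := one_pos.trans_le ((le_max_right _ _).trans h)
    replace h1 : r ^ α ≤ δ / (C + 1) * r := by
      calc r ^ α = r ^ (-(1 - α)) * r := by
            conv_rhs => rw [← Real.rpow_add_one hr1.ne']
            congr 1; ring
        _ ≤ _ := by gcongr
    have h2 := mul_le_mul_of_nonneg_left h1 hC
    have h3 : C * (δ / (C + 1) * r) ≤ δ * r := by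
      have : C / (C + 1) ≤ 1 := by rw [div_le_one (by positivity)]; linarith
      calc _ = C / (C + 1) * (δ * r) := by ring
        _ ≤ 1 * (δ * r) := by gcongr
        _ = _ := one_mul _
    have : 0 ≤ m' ^ α := by positivity
    nlinarith

/-! ### The maximum principle argument -/

lemma contDiff_slice {N : ℕ} {v : EuclideanSpace ℝ (Fin N) × ℝ → ℝ}
    (hsmooth : ContDiffOn ℝ (⊤ : ℕ∞) v ((univ : Set (EuclideanSpace ℝ (Fin N))) ×ˢ Ioi (0 : ℝ)))
    {t : ℝ} (ht : 0 < t) : ContDiff ℝ 2 fun z => v (z, t) := by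
  have h2 : ContDiffOn ℝ 2 v ((univ : Set (EuclideanSpace ℝ (Fin N))) ×ˢ Ioi (0 : ℝ)) :=
    hsmooth.of_le (WithTop.coe_le_coe.2 le_top)
  exact contDiffOn_univ.1 (h2.comp (by fun_prop) fun z _ => ⟨mem_univ _, ht⟩)

lemma hasDerivAt_time {N : ℕ} {v : EuclideanSpace ℝ (Fin N) × ℝ → ℝ}
    (hsmooth : ContDiffOn ℝ (⊤ : ℕ∞) v ((univ : Set (EuclideanSpace ℝ (Fin N))) ×ˢ Ioi (0 : ℝ)))
    (x : EuclideanSpace ℝ (Fin N)) {t : ℝ} (ht : 0 < t) :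
    HasDerivAt (fun s => v (x, s)) (timeDeriv v x t) t := by
  have hd : DifferentiableAt ℝ v (x, t) :=
    (hsmooth.contDiffAt ((isOpen_univ.prod isOpen_Ioi).mem_nhds
      (⟨mem_univ x, ht⟩ : (x, t) ∈ univ ×ˢ Ioi (0 : ℝ)))).differentiableAt
      (by simp)
  have : DifferentiableAt ℝ (fun s => v (x, s)) t :=
    DifferentiableAt.comp t (f := fun s : ℝ => (x, s)) hd (by fun_prop)
  exact this.hasDerivAt

/-- The core estimate: at any fixed time `v` has increments at most `δ * barrier`, for every `δ > 0`.
If this fails, then `v (x, t) - v (y, t) - δ * barrier |x - y| - ε ⟨x⟩ - ε t` attains a positive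
maximum over `t ≥ τ`, where the equation is contradicted once `ε` is small. -/
lemma spatial_increment_le {N : ℕ} {γ : ℝ} (hγ : 2 < γ) (h : ℝ)
    {v : EuclideanSpace ℝ (Fin N) × ℝ → ℝ}
    (hsmooth : ContDiffOn ℝ (⊤ : ℕ∞) v ((univ : Set (EuclideanSpace ℝ (Fin N))) ×ˢ Ioi (0 : ℝ)))
    (heq : ∀ (x : EuclideanSpace ℝ (Fin N)) (t : ℝ), 0 < t →
      -(timeDeriv v x t) - spatialLap v x t + h * ‖spatialGrad v x t‖ ^ γ = 0)
    {α C : ℝ} (hα0 : 0 < α) (hα1 : α < 1) (hC : 0 ≤ C)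
    (hgrowth : ∀ (x y : EuclideanSpace ℝ (Fin N)) (t : ℝ), 0 < t →
      v (x, t) - v (y, t) ≤ C * (‖x - y‖ ^ α + 1))
    {δ τ : ℝ} (hδ : 0 < δ) (hτ : 0 < τ) (x₀ y₀ : EuclideanSpace ℝ (Fin N)) :
    v (x₀, τ) - v (y₀, τ) ≤ δ * barrier ‖x₀ - y₀‖ := by
  by_contra! hcon
  obtain ⟨A, hA0, hA⟩ := exists_growth_le hα0 hα1 hC (half_pos hδ)
  set η := v (x₀, τ) - v (y₀, τ) - δ * barrier ‖x₀ - y₀‖ with hη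
  have hη0 : 0 < η := by linarith
  set R₀ := 2 * A / δ with hR₀
  have hR₀0 : 0 ≤ R₀ := by positivity
  -- `L` is `|h|` times the Lipschitz constant of `s ↦ s ^ γ` on the range of gradients met below.
  set L := |h| * (γ * (2 * δ + 1) ^ (γ - 1)) with hL
  have hL0 : 0 ≤ L := by positivity
  set c := 8 * δ / (1 + R₀) ^ 3 with hc
  have hc0 : 0 < c := by positivity
  have hj0 : 0 < jap x₀ + τ := by linarith [one_le_jap x₀]
  obtain ⟨ε, hε0, hε1, hεη, hεc⟩ : ∃ ε : ℝ, 0 < ε ∧ ε ≤ 1 ∧ ε * (jap x₀ + τ) < η ∧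
      ε * (N + 1 + L) < c := by
    have hN : 0 < N + 1 + L := by positivity
    have t1 : ∀ᶠ ε in nhdsWithin (0 : ℝ) (Ioi 0), ε * (jap x₀ + τ) < η := by
      refine Filter.Eventually.filter_mono nhdsWithin_le_nhds ?_
      exact (by fun_prop : Continuous fun ε : ℝ => ε * (jap x₀ + τ)).continuousAt.eventually_lt
        continuousAt_const (by simpa using hη0)
    have t2 : ∀ᶠ ε in nhdsWithin (0 : ℝ) (Ioi 0), ε * (N + 1 + L) < c := by
      refine Filter.Eventually.filter_mono nhdsWithin_le_nhds ?_
      exact (by fun_prop : Continuous fun ε : ℝ => ε * (N + 1 + L)).continuousAt.eventually_lt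
        continuousAt_const (by simpa using hc0)
    have t3 : ∀ᶠ ε in nhdsWithin (0 : ℝ) (Ioi 0), ε ≤ 1 :=
      Filter.Eventually.filter_mono nhdsWithin_le_nhds (eventually_le_nhds one_pos)
    have t4 : ∀ᶠ ε in nhdsWithin (0 : ℝ) (Ioi 0), 0 < ε := self_mem_nhdsWithin
    obtain ⟨ε, h1, h2, h3, h4⟩ := (t1.and (t2.and (t3.and t4))).exists
    exact ⟨ε, h4, h3, h1, h2⟩
  set Φ : EuclideanSpace ℝ (Fin N) × EuclideanSpace ℝ (Fin N) × ℝ → ℝ := fun p =>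
    v (p.1, p.2.2) - v (p.2.1, p.2.2) - δ * barrier ‖p.1 - p.2.1‖ - ε * jap p.1 - ε * p.2.2
    with hΦ
  have hΦ₀ : 0 < Φ (x₀, y₀, τ) := by simp only [hΦ]; linarith
  -- The bound `R₀` on `‖x - y‖` does not depend on `ε`; hence neither does the gain `c`.
  have hcoer : ∀ x y t, τ ≤ t → 0 < Φ (x, y, t) →
      ‖x - y‖ ≤ R₀ ∧ ‖x‖ ≤ A / ε ∧ t ≤ A / ε := by
    intro x y t ht hp
    simp only [hΦ] at hp
    have g1 := hgrowth x y t (hτ.trans_le ht)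
    have g2 := hA ‖x - y‖ (norm_nonneg _)
    have g3 := mul_le_mul_of_nonneg_left (le_barrier (norm_nonneg (x - y))) hδ.le
    have g4 := mul_le_mul_of_nonneg_left (norm_le_jap x) hε0.le
    have g5 : 0 ≤ ε * ‖x‖ := by positivity
    have g6 : 0 < ε * t := mul_pos hε0 (hτ.trans_le ht)
    have g7 : 0 ≤ δ * ‖x - y‖ := by positivity
    refine ⟨?_, ?_, ?_⟩
    · rw [hR₀, le_div_iff₀ hδ]; linarith
    · rw [le_div_iff₀ hε0]; linarith
    · rw [le_div_iff₀ hε0]; linarith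
  set K := closedBall (0 : EuclideanSpace ℝ (Fin N)) (A / ε + R₀) ×ˢ
    closedBall (0 : EuclideanSpace ℝ (Fin N)) (A / ε + R₀) ×ˢ Icc τ (A / ε) with hK
  have hKmem : ∀ x y t, τ ≤ t → 0 < Φ (x, y, t) → (x, y, t) ∈ K := by
    intro x y t ht hp
    obtain ⟨h1, h2, h3⟩ := hcoer x y t ht hp
    refine ⟨?_, ?_, ht, h3⟩
    · rw [mem_closedBall_zero_iff]; exact h2.trans (by linarith)
    · rw [mem_closedBall_zero_iff]
      have := norm_sub_norm_le y x
      rw [norm_sub_rev] at this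
      change ‖y‖ ≤ _
      linarith
  have hKc : IsCompact K :=
    (isCompact_closedBall _ _).prod ((isCompact_closedBall _ _).prod isCompact_Icc)
  have hΦc : ContinuousOn Φ K := by
    have hpos : ∀ p ∈ K, 0 < p.2.2 := fun p hp => hτ.trans_le hp.2.2.1
    have c1 : ContinuousOn (fun p : EuclideanSpace ℝ (Fin N) × EuclideanSpace ℝ (Fin N) × ℝ =>
        v (p.1, p.2.2)) K :=
      hsmooth.continuousOn.comp (by fun_prop) fun p hp => ⟨mem_univ _, hpos p hp⟩
    have c2 : ContinuousOn (fun p : EuclideanSpace ℝ (Fin N) × EuclideanSpace ℝ (Fin N) × ℝ =>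
        v (p.2.1, p.2.2)) K :=
      hsmooth.continuousOn.comp (by fun_prop) fun p hp => ⟨mem_univ _, hpos p hp⟩
    have c3 : Continuous (fun p : EuclideanSpace ℝ (Fin N) × EuclideanSpace ℝ (Fin N) × ℝ =>
        barrier ‖p.1 - p.2.1‖) := by
      unfold barrier
      refine Continuous.sub (by fun_prop) (Continuous.div (by fun_prop) (by fun_prop) fun p => ?_)
      positivity
    have c4 : Continuous (fun p : EuclideanSpace ℝ (Fin N) × EuclideanSpace ℝ (Fin N) × ℝ =>
        jap p.1) := by
      unfold jap; fun_prop
    exact (((c1.sub c2).sub (c3.const_mul δ).continuousOn).sub (c4.const_mul ε).continuousOn).sub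
      (by fun_prop)
  obtain ⟨⟨x, y, t⟩, hpK, hpmax⟩ := hKc.exists_isMaxOn ⟨_, hKmem x₀ y₀ τ le_rfl hΦ₀⟩ hΦc
  have hτt : τ ≤ t := hpK.2.2.1
  have ht0 : 0 < t := hτ.trans_le hτt
  have hpos : 0 < Φ (x, y, t) := hΦ₀.trans_le (hpmax (hKmem x₀ y₀ τ le_rfl hΦ₀))
  have hmax : ∀ x' y' t', τ ≤ t' → Φ (x', y', t') ≤ Φ (x, y, t) := by
    intro x' y' t' ht'
    by_cases hp : 0 < Φ (x', y', t')
    · exact hpmax (hKmem x' y' t' ht' hp)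
    · linarith
  have hxy : x ≠ y := by
    rintro rfl
    have : 0 < ε * jap x := mul_pos hε0 (by linarith [one_le_jap x])
    have : 0 < ε * t := mul_pos hε0 ht0
    simp only [hΦ, sub_self, norm_zero, barrier] at hpos
    norm_num at hpos
    linarith
  have hmaxs : ∀ x' y', v (x', t) - v (y', t) - δ * barrier ‖x' - y'‖ - ε * jap x'
      ≤ v (x, t) - v (y, t) - δ * barrier ‖x - y‖ - ε * jap x := by
    intro x' y'
    have := hmax x' y' t hτt
    simp only [hΦ] at this
    linarith
  have hf := contDiff_slice hsmooth ht0
  obtain ⟨b, b', hlap⟩ := sum_hessian_sub_le hf hδ hε0 hxy hmaxs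
  rw [← spatialLap_eq_sum v x t hf b, ← spatialLap_eq_sum v y t hf b'] at hlap
  obtain ⟨hg1, hg2⟩ := gradient_bounds (hf.differentiable (by norm_num)) hδ hε0 hmaxs
  change ‖spatialGrad v y t‖ ≤ 2 * δ at hg1
  change ‖spatialGrad v x t - spatialGrad v y t‖ ≤ ε at hg2
  have hg3 := abs_norm_sub_norm_le (spatialGrad v x t) (spatialGrad v y t)
  have hg4 : ‖spatialGrad v x t‖ ≤ 2 * δ + 1 := by
    linarith [le_abs_self (‖spatialGrad v x t‖ - ‖spatialGrad v y t‖)]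
  -- The maximum may lie on the initial slice `t = τ`, so only later times are compared.
  have htime : timeDeriv v x t - timeDeriv v y t ≤ ε := by
    refine deriv_le_of_right_slope_le
      ((hasDerivAt_time hsmooth x ht0).sub (hasDerivAt_time hsmooth y ht0)) fun s hs => ?_
    have := hmax x y s (hτt.trans hs.le)
    simp only [hΦ] at this
    simp only [Pi.sub_apply]
    linarith
  have hham : |h * ‖spatialGrad v x t‖ ^ γ - h * ‖spatialGrad v y t‖ ^ γ| ≤ L * ε := by
    rw [← mul_sub, abs_mul, hL, mul_assoc]
    refine mul_le_mul_of_nonneg_left ?_ (abs_nonneg h)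
    refine (abs_rpow_sub_rpow_le (B := 2 * δ + 1) (by linarith) ⟨norm_nonneg _, hg4⟩
      ⟨norm_nonneg _, by linarith⟩).trans ?_
    exact mul_le_mul_of_nonneg_left (hg3.trans hg2) (by positivity)
  have hcr : c ≤ 8 * δ / (1 + ‖x - y‖) ^ 3 := by
    have := (hcoer x y t hτt hpos).1
    rw [hc]
    gcongr
  have e1 := heq x t ht0
  have e2 := heq y t ht0
  have e3 := (abs_le.1 hham).1
  linarith

/-- **Strengthened Liouville theorem** (Remark 4.2): a smooth entire solution of
`-∂ₜv - Δv + h|Dv|^γ = 0` on `ℝ^N × (0,∞)` with `h ≠ 0`, satisfying only the growth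
bound `|v(x,t) - v(x',t')| ≤ M(|x-x'|^α + |t-t'|^β + 1)` for some `0 < α < 1`, `β > 0`,
is constant. -/
theorem liouville_strengthened
    (N : ℕ) (hN : 1 ≤ N) (γ : ℝ) (hγ : 2 < γ) (h : ℝ) (hh : h ≠ 0)
    (v : EuclideanSpace ℝ (Fin N) × ℝ → ℝ)
    (hsmooth : ContDiffOn ℝ (⊤ : ℕ∞) v ((univ : Set (EuclideanSpace ℝ (Fin N))) ×ˢ Ioi (0 : ℝ)))
    (heq : ∀ (x : EuclideanSpace ℝ (Fin N)) (t : ℝ), 0 < t →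
      -(timeDeriv v x t) - spatialLap v x t + h * ‖spatialGrad v x t‖ ^ γ = 0)
    (α β : ℝ) (hα0 : 0 < α) (hα1 : α < 1) (hβ : 0 < β)
    (hgrowth : ∃ M : ℝ, ∀ (x x' : EuclideanSpace ℝ (Fin N)) (t t' : ℝ), 0 < t → 0 < t' →
      |v (x, t) - v (x', t')| ≤ M * (‖x - x'‖ ^ α + |t - t'| ^ β + 1)) :
    ∀ (x x' : EuclideanSpace ℝ (Fin N)) (t t' : ℝ), 0 < t → 0 < t' →
      v (x, t) = v (x', t') := by
  obtain ⟨M, hM⟩ := hgrowth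
  have hg : ∀ (x y : EuclideanSpace ℝ (Fin N)) (t : ℝ), 0 < t →
      v (x, t) - v (y, t) ≤ |M| * (‖x - y‖ ^ α + 1) := by
    intro x y t ht
    have h1 := (le_abs_self _).trans (hM x y t t ht ht)
    rw [sub_self, abs_zero, Real.zero_rpow hβ.ne', add_zero] at h1
    exact h1.trans (mul_le_mul_of_nonneg_right (le_abs_self M) (by positivity))
  have hle : ∀ x y t, 0 < t → v (x, t) ≤ v (y, t) := by
    intro x y t ht
    refine le_of_forall_pos_le_add fun ε hε => ?_
    have hB : 0 ≤ barrier ‖x - y‖ := (norm_nonneg _).trans (le_barrier (norm_nonneg _))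
    have h1 := spatial_increment_le hγ h hsmooth heq hα0 hα1 (abs_nonneg M) hg
      (δ := ε / (barrier ‖x - y‖ + 1)) (by positivity) ht x y
    have h2 : ε / (barrier ‖x - y‖ + 1) * barrier ‖x - y‖ ≤ ε := by
      rw [div_mul_eq_mul_div, div_le_iff₀ (by positivity)]
      nlinarith
    linarith
  have hx : ∀ x y t, 0 < t → v (x, t) = v (y, t) := fun x y t ht =>
    le_antisymm (hle x y t ht) (hle y x t ht)
  -- The gradient and the Laplacian vanish, so the equation gives `∂ₜ v = 0`.
  have htd : ∀ t, 0 < t → HasDerivAt (fun s => v (0, s)) 0 t := by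
    intro t ht
    have hconst : (fun z => v (z, t)) = fun _ => v (0, t) := funext fun z => hx z 0 t ht
    have h1 := heq 0 t ht
    have h2 : spatialLap v 0 t = 0 := by simp [spatialLap, hconst]
    have h3 : spatialGrad v 0 t = 0 := by simp [spatialGrad, gradient, hconst]
    rw [h2, h3, norm_zero, Real.zero_rpow (by linarith)] at h1
    have h4 : timeDeriv v 0 t = 0 := by linarith
    exact h4 ▸ hasDerivAt_time hsmooth 0 ht
  intro x x' t t' ht ht'
  rw [hx x 0 t ht, hx x' 0 t' ht']
  have := (convex_Ioi (0 : ℝ)).norm_image_sub_le_of_norm_hasDerivWithin_le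
    (f := fun s => v (0, s)) (f' := fun _ => 0) (C := 0)
    (fun s hs => (htd s hs).hasDerivWithinAt) (by simp) (mem_Ioi.2 ht') (mem_Ioi.2 ht)
  rw [zero_mul, norm_le_zero_iff] at this
  exact sub_eq_zero.1 this
end
end
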